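/- arXiv:2605.24240 — 3 statements merged into one kernel-verified Lean document; each statement's English description precedes it below -/
import Mathlib

section
/- Let E be a regular category with limits of shape J, where J is a small category, let d : J ⥤ E be a diagram, and let Im(d) be its image diagram together with the natural monomorphism i : Im(d) ↪ d. Then the morphism lim Im(d) → lim d induced by i on limits is an isomorphism; in particular lim Im(d) ≅ lim d. -/
open CategoryTheory CategoryTheory.Limits

universe w v u

variable {E : Type u} [Category.{v} E] {J : Type w} [SmallCategory J]

section ImageDiagram

variable [HasStrongEpiMonoFactorisations E] [HasLimitsOfShape J E]

/-- The image diagram `Im(d)` of a diagram `d : J ⥤ E`: it sends each object `j` to the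
image `im(λ_j)` of the limit cone leg `λ_j : lim d ⟶ d(j)`, with action on morphisms induced
by the functoriality of image factorizations applied to the naturality triangles of the
limit cone. -/
noncomputable def imageDiagram (d : J ⥤ E) : J ⥤ E where
  obj j := image (limit.π d j)
  map {j j'} f := image.map (Arrow.homMk' _ _
    (show 𝟙 (limit d) ≫ limit.π d j' = limit.π d j ≫ d.map f by simp))
  map_id j := by
    apply (cancel_mono (image.ι (limit.π d j))).mp
    simp [image.map_homMk'_ι]
  map_comp {j j' j''} f g := by
    apply (cancel_mono (image.ι (limit.π d j''))).mp
    simp only [Category.assoc, image.map_homMk'_ι]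
    rw [← Category.assoc, image.map_homMk'_ι]
    simp

/-- The natural monomorphism `i : Im(d) ↪ d`, whose components are the mono parts
`im(λ_j) ↪ d(j)` of the image factorizations of the limit cone legs. -/
noncomputable def imageDiagramInclusion (d : J ⥤ E) : imageDiagram d ⟶ d where
  app j := image.ι (limit.π d j)
  naturality j j' f := by
    simp [imageDiagram, image.map_homMk'_ι]

end ImageDiagram

/-- Let `E` be a regular category (finitely complete, with coequalizers of
kernel pairs, regular epimorphisms stable under pullback, hence with strong epi–mono
factorizations) with limits of shape `J`, let `d : J ⥤ E` be a diagram, and let `Im(d)` be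
its image diagram with natural monomorphism `i : Im(d) ↪ d`. Then the morphism
`lim Im(d) ⟶ lim d` induced by `i` is an isomorphism; in particular `lim Im(d) ≅ lim d`. -/
theorem stmt_2
    [HasFiniteLimits E]
    (hKernelPairCoeq : ∀ {X Y : E} (f : X ⟶ Y),
      HasCoequalizer (pullback.fst f f) (pullback.snd f f))
    (hRegEpiStable : ∀ {X Y Z : E} (f : X ⟶ Z) (g : Y ⟶ Z),
      RegularEpi g → Nonempty (RegularEpi (pullback.fst f g)))
    [HasStrongEpiMonoFactorisations E]
    [HasLimitsOfShape J E]
    (d : J ⥤ E) :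
    IsIso (limMap (imageDiagramInclusion d)) ∧
      Nonempty (limit (imageDiagram d) ≅ limit d) := by
  have key : IsIso (limMap (imageDiagramInclusion d)) := by
    let c : Cone (imageDiagram d) :=
      { pt := limit d
        π := 
          { app := fun j => factorThruImage (limit.π d j)
            naturality := fun j j' f => by
              apply (cancel_mono (image.ι (limit.π d j'))).mp
              have h : (imageDiagram d).map f ≫ (imageDiagramInclusion d).app j' =
                (imageDiagramInclusion d).app j ≫ d.map f :=
                (imageDiagramInclusion d).naturality f
              have e : ∀ k, (show limit d ⟶ (imageDiagram d).obj k from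
                  factorThruImage (limit.π d k)) ≫ (imageDiagramInclusion d).app k =
                  limit.π d k := fun k => image.fac _
              generalize hp : (show ∀ k, limit d ⟶ (imageDiagram d).obj k from
                  fun k => factorThruImage (limit.π d k)) = p at e
              have e' : ∀ k, p k ≫ (imageDiagramInclusion d).app k = limit.π d k := by
                subst hp; exact e
              have goal : (𝟙 (limit d) ≫ p j') ≫ (imageDiagramInclusion d).app j' =
                  (p j ≫ (imageDiagram d).map f) ≫ (imageDiagramInclusion d).app j' := by
                rw [Category.id_comp, Category.assoc, h, ← Category.assoc, e', e', limit.w]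
              subst hp
              exact goal } }
    have hc : ∀ j, limit.lift (imageDiagram d) c ≫ limit.π (imageDiagram d) j =
        factorThruImage (limit.π d j) := fun j => limit.lift_π c j
    have h1 : limit.lift (imageDiagram d) c ≫ limMap (imageDiagramInclusion d) =
        𝟙 (limit d) := by
      apply limit.hom_ext
      intro j
      rw [Category.assoc, limMap_π, ← Category.assoc, hc, Category.id_comp]
      exact image.fac _
    have : ∀ j, Mono ((imageDiagramInclusion d).app j) := fun j =>
      inferInstanceAs (Mono (image.ι (limit.π d j)))
    have : Mono (limMap (imageDiagramInclusion d)) := limMap_mono _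
    refine ⟨limit.lift (imageDiagram d) c, ?_, h1⟩
    rw [← cancel_mono (limMap (imageDiagramInclusion d)), Category.assoc, h1,
      Category.comp_id, Category.id_comp]
  exact ⟨key, ⟨@asIso _ _ _ _ _ key⟩⟩
end

section
/- Let G be a finite simple graph, d : ∫G^op → FinSet a structured co-decomposition, and e an edge of G. Then d and Filter(d,e) have the same image diagram: for every object z of ∫G (vertex or edge), the set-theoretic image of the limit projection lim Filter(d,e) → Filter(d,e)(z) coincides, as a subset of d(z), with the set-theoretic image of the limit projection lim d → d(z). -/
open CategoryTheory CategoryTheory.Limits Opposite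

variable {V : Type}

/-- Objects of the barycentric subdivision `∫G` of a simple graph `G`:
vertices and edges of `G`. -/
def BarySub (G : SimpleGraph V) : Type := V ⊕ G.edgeSet

/-- The preorder on `∫G`: besides reflexivity, `e ≤ x` precisely when the
edge `e` is incident with the vertex `x`. -/
instance BarySub.instPreorder (G : SimpleGraph V) : Preorder (BarySub G) where
  le a b := a = b ∨ ∃ (e : G.edgeSet) (x : V), a = Sum.inr e ∧ b = Sum.inl x ∧ x ∈ (e : Sym2 V)
  le_refl a := Or.inl rfl
  le_trans a b c h₁ h₂ := by
    rcases h₁ with rfl | ⟨e, x, rfl, rfl, hx⟩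
    · exact h₂
    · rcases h₂ with rfl | ⟨e', x', h, _, _⟩
      · exact Or.inr ⟨e, x, rfl, rfl, hx⟩
      · simp at h

/-- The object of `(∫G)ᵒᵖ` corresponding to a vertex `t` of `G`. -/
def vtx (G : SimpleGraph V) (t : V) : (BarySub G)ᵒᵖ := op (Sum.inl t)

/-- The object of `(∫G)ᵒᵖ` corresponding to an edge `e` of `G`. -/
def edg (G : SimpleGraph V) (e : G.edgeSet) : (BarySub G)ᵒᵖ := op (Sum.inr e)

/-- The morphism `x → e` of `(∫G)ᵒᵖ` for `x` a vertex incident with the edge `e`. -/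
def inc (G : SimpleGraph V) (e : G.edgeSet) (t : V) (ht : t ∈ (e : Sym2 V)) :
    vtx G t ⟶ edg G e :=
  (homOfLE (Or.inr ⟨e, t, rfl, rfl, ht⟩)).op

/-- Any two parallel morphisms in `(∫G)ᵒᵖ` agree (it is a poset). -/
lemma baryHom_ext {G : SimpleGraph V} {U W : (BarySub G)ᵒᵖ} (i j : U ⟶ W) : i = j :=
  Quiver.Hom.unop_inj (Subsingleton.elim _ _)

/-- The only morphisms of `(∫G)ᵒᵖ` into a vertex object are identities. -/
lemma eq_vtx_of_hom {G : SimpleGraph V} {U : (BarySub G)ᵒᵖ} {t : V} (i : U ⟶ vtx G t) :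
    U = vtx G t := by
  have h := (Quiver.Hom.unop i).le
  rcases h with h | ⟨e, x, h, _, _⟩
  · exact unop_injective h.symm
  · simp [vtx] at h

/-- A global matching family for `d : (∫G)ᵒᵖ ⥤ Type`: a choice of `a t ∈ d t` for every
vertex `t` such that for every edge `e = xy` we have `d(e_x)(a x) = d(e_y)(a y)`. -/
def IsMatchingFamily (G : SimpleGraph V) (d : (BarySub G)ᵒᵖ ⥤ Type)
    (a : ∀ t : V, d.obj (vtx G t)) : Prop :=
  ∀ (e : G.edgeSet) (x : V) (hx : x ∈ (e : Sym2 V)) (y : V) (hy : y ∈ (e : Sym2 V)),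
    d.map (inc G e x hx) (a x) = d.map (inc G e y hy) (a y)
open CategoryTheory.GrothendieckTopology

/-- The edge `s(x,y)` of `G` as an element of `G.edgeSet`. -/
def edgeOf (G : SimpleGraph V) {x y : V} (h : G.Adj x y) : G.edgeSet :=
  ⟨s(x, y), G.mem_edgeSet.mpr h⟩

/-- `Filter(d, e)` for the edge `e = xy`: the subfunctor of `d` given at `x` by
`{a ∈ d(x) | ∃ b ∈ d(y), d(e_x)(a) = d(e_y)(b)}`, at `y` by
`{b ∈ d(y) | ∃ a ∈ d(x), d(e_x)(a) = d(e_y)(b)}`, at `e` by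
`{c ∈ d(e) | ∃ a b, d(e_x)(a) = c = d(e_y)(b)}`, and by `d(z)` at every other object. -/
def filterSub (G : SimpleGraph V) (d : (BarySub G)ᵒᵖ ⥤ Type) (x y : V) (h : G.Adj x y) :
    Subfunctor d where
  obj z := {c |
    (∀ hz : z = vtx G x, ∃ b : d.obj (vtx G y),
      d.map (inc G (edgeOf G h) x (Sym2.mem_mk_left x y)) (hz ▸ c)
        = d.map (inc G (edgeOf G h) y (Sym2.mem_mk_right x y)) b) ∧
    (∀ hz : z = vtx G y, ∃ a : d.obj (vtx G x),
      d.map (inc G (edgeOf G h) x (Sym2.mem_mk_left x y)) a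
        = d.map (inc G (edgeOf G h) y (Sym2.mem_mk_right x y)) (hz ▸ c)) ∧
    (∀ hz : z = edg G (edgeOf G h),
      (∃ a : d.obj (vtx G x),
        d.map (inc G (edgeOf G h) x (Sym2.mem_mk_left x y)) a = hz ▸ c) ∧
      (∃ b : d.obj (vtx G y),
        d.map (inc G (edgeOf G h) y (Sym2.mem_mk_right x y)) b = hz ▸ c))}
  map := by
    rintro U W i c hc
    refine ⟨?_, ?_, ?_⟩
    · rintro rfl
      obtain rfl : U = vtx G x := eq_vtx_of_hom i
      rw [baryHom_ext i (𝟙 _)]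
      simpa using hc.1 rfl
    · rintro rfl
      obtain rfl : U = vtx G y := eq_vtx_of_hom i
      rw [baryHom_ext i (𝟙 _)]
      simpa using hc.2.1 rfl
    · rintro rfl
      rcases (Quiver.Hom.unop i).le with hU | ⟨e', x', hEq, hUx, hx'⟩
      · obtain rfl : U = edg G (edgeOf G h) := unop_injective hU.symm
        rw [baryHom_ext i (𝟙 _)]
        simpa using hc.2.2 rfl
      · obtain rfl : e' = edgeOf G h := by
          have := hEq
          simp only [edg] at this
          exact (Sum.inr.injEq _ _ ▸ this).symm
        rcases Sym2.mem_iff.mp hx' with rfl | rfl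
        · obtain rfl : U = vtx G x' := unop_injective hUx
          rw [baryHom_ext i (inc G (edgeOf G h) x' (Sym2.mem_mk_left x' y))]
          obtain ⟨b, hb⟩ := hc.1 rfl
          exact ⟨⟨c, rfl⟩, ⟨b, hb.symm⟩⟩
        · obtain rfl : U = vtx G x' := unop_injective hUx
          rw [baryHom_ext i (inc G (edgeOf G h) x' (Sym2.mem_mk_right x x'))]
          obtain ⟨a, ha⟩ := hc.2.1 rfl
          exact ⟨⟨a, ha⟩, ⟨c, rfl⟩⟩

/-- `d` and `Filter(d,e)` have the same image diagram: at every object `z`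
of `∫G`, the set-theoretic image of the limit projection `lim Filter(d,e) → Filter(d,e)(z)`,
viewed inside `d(z)` via the inclusion, coincides with the image of `lim d → d(z)`. -/
theorem stmt_6 {V : Type} [Fintype V] (G : SimpleGraph V)
    (d : (BarySub G)ᵒᵖ ⥤ Type) [∀ z, Finite (d.obj z)] (x y : V) (h : G.Adj x y) :
    ∀ z : (BarySub G)ᵒᵖ,
      (filterSub G d x y h).ι.app z ''
          Set.range (limit.π (filterSub G d x y h).toFunctor z) =
        Set.range (limit.π d z) := by
  have key : ∀ (l : limit d) (z : (BarySub G)ᵒᵖ),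
      limit.π d z l ∈ (filterSub G d x y h).obj z := by
    intro l z
    have hw : ∀ {U W : (BarySub G)ᵒᵖ} (i : U ⟶ W),
        d.map i (limit.π d U l) = limit.π d W l := by
      intro U W i
      exact Types.Limit.w_apply i
    refine ⟨?_, ?_, ?_⟩
    · rintro rfl
      exact ⟨limit.π d _ l, (hw _).trans (hw _).symm⟩
    · rintro rfl
      exact ⟨limit.π d _ l, (hw _).trans (hw _).symm⟩
    · rintro rfl
      exact ⟨⟨limit.π d _ l, hw _⟩, ⟨limit.π d _ l, hw _⟩⟩
  intro z
  ext c
  constructor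
  · rintro ⟨_, ⟨l, rfl⟩, rfl⟩
    refine ⟨limMap (filterSub G d x y h).ι l, ?_⟩
    exact ConcreteCategory.congr_hom (limMap_π (filterSub G d x y h).ι z) l
  · rintro ⟨l, rfl⟩
    refine ⟨⟨limit.π d z l, key l z⟩, ⟨Types.Limit.mk _ (fun w => ⟨limit.π d w l, key l w⟩) ?_, ?_⟩, rfl⟩
    · intro U W i
      exact Subtype.ext (Types.Limit.w_apply i)
    · exact Types.Limit.π_mk _ _ _ _
end

section
/- Let F be a finite forest (a finite simple graph with no cycles) and let d : ∫F^op → FinSet be a structured co-decomposition. Then lim d is empty if and only if there exists a connected component T of F and a vertex t of T such that the set-theoretic image of the limit projection lim(d|_{∫T^op}) → d(t) is empty; moreover, for a fixed component T, if this image is empty for one vertex of T then it is empty for every vertex of T. -/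
open CategoryTheory CategoryTheory.Limits Opposite

variable {V : Type}

/-- The map `∫H → ∫G` induced by a graph homomorphism `f : H →g G`. -/
def mapBary {W : Type} {H : SimpleGraph W} {G : SimpleGraph V} (f : H →g G) :
    BarySub H → BarySub G
  | .inl v => .inl (f v)
  | .inr e => .inr (f.mapEdgeSet e)

lemma mapBary_monotone {W : Type} {H : SimpleGraph W} {G : SimpleGraph V} (f : H →g G) :
    Monotone (mapBary f) := by
  rintro a b (rfl | ⟨e, t, rfl, rfl, ht⟩)
  · exact le_refl _
  · exact Or.inr ⟨f.mapEdgeSet e, f t, rfl, rfl, Sym2.mem_map.mpr ⟨t, ht, rfl⟩⟩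

/-- The restriction of a structured co-decomposition `d : (∫G)ᵒᵖ ⥤ Type` along a graph
homomorphism `f : H →g G`, i.e. the composite of `d` with the functor `(∫H)ᵒᵖ → (∫G)ᵒᵖ`. -/
def restrictBary {W : Type} {H : SimpleGraph W} {G : SimpleGraph V} (f : H →g G)
    (d : (BarySub G)ᵒᵖ ⥤ Type) : (BarySub H)ᵒᵖ ⥤ Type :=
  (mapBary_monotone f).functor.op ⋙ d
/-- The subgraph of `G` induced by a connected component `c`. -/
def compSubgraph (G : SimpleGraph V) (c : G.ConnectedComponent) : G.Subgraph where
  verts := c.supp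
  Adj u w := G.Adj u w ∧ u ∈ c.supp ∧ w ∈ c.supp
  adj_sub h := h.1
  edge_vert h := h.2.1
  symm := ⟨fun _ _ h => ⟨h.1.symm, h.2.2, h.2.1⟩⟩

/-- The set-theoretic image of the limit projection `lim d → d(z)`:
the value of the image diagram of `d` at `z`. -/
noncomputable def imSet (G : SimpleGraph V) (d : (BarySub G)ᵒᵖ ⥤ Type)
    (z : (BarySub G)ᵒᵖ) : Set (d.obj z) :=
  Set.range (limit.π d z)

lemma nonempty_limit_iff {V : Type} (G : SimpleGraph V) (d : (BarySub G)ᵒᵖ ⥤ Type) :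
    Nonempty (limit d) ↔ ∃ a, IsMatchingFamily G d a := by
  constructor
  · rintro ⟨p⟩
    refine ⟨fun t => limit.π d (vtx G t) p, fun e x hx y hy => ?_⟩
    have h1 := ConcreteCategory.congr_hom (limit.w d (inc G e x hx)) p
    have h2 := ConcreteCategory.congr_hom (limit.w d (inc G e y hy)) p
    exact h1.trans h2.symm
  · rintro ⟨a, ha⟩
    have hex : ∀ e : G.edgeSet, ∃ x, x ∈ (e : Sym2 V) := fun e => ⟨_, Sym2.out_fst_mem _⟩
    choose r hr using hex
    let s : ∀ z : (BarySub G)ᵒᵖ, d.obj z := fun z =>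
      match z with
      | ⟨.inl t⟩ => a t
      | ⟨.inr e⟩ => d.map (inc G e (r e) (hr e)) (a (r e))
    have hs : s ∈ d.sections := by
      intro z w i
      have h := (Quiver.Hom.unop i).le
      rcases h with h | ⟨e, x, h1, h2, hx⟩
      · have h' : z = w := unop_injective h.symm
        subst h'
        rw [baryHom_ext i (𝟙 _)]
        simp
      · have h1' : w = edg G e := unop_injective h1
        have h2' : z = vtx G x := unop_injective h2
        subst h1' h2'
        rw [baryHom_ext i (inc G e x hx)]
        exact ha e x hx (r e) (hr e)
    exact ⟨(Types.limitEquivSections d).symm ⟨s, hs⟩⟩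

lemma imSet_eq_empty_iff {V : Type} (G : SimpleGraph V) (d : (BarySub G)ᵒᵖ ⥤ Type)
    (z : (BarySub G)ᵒᵖ) : imSet G d z = ∅ ↔ IsEmpty (limit d) :=
  Set.range_eq_empty_iff

lemma matching_of_components {V : Type} (G : SimpleGraph V) (d : (BarySub G)ᵒᵖ ⥤ Type)
    (h : ∀ c : G.ConnectedComponent, ∃ a, IsMatchingFamily (compSubgraph G c).coe
      (restrictBary (compSubgraph G c).hom d) a) : ∃ a, IsMatchingFamily G d a := by
  choose a ha using h
  let b : ∀ t : V, d.obj (vtx G t) := fun t => a (G.connectedComponentMk t) ⟨t, rfl⟩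
  have hb : ∀ (c : G.ConnectedComponent) (t : V) (ht : t ∈ c.supp), a c ⟨t, ht⟩ = b t := by
    intro c t ht
    have ht' : G.connectedComponentMk t = c := ht
    subst ht'
    rfl
  refine ⟨b, fun e x hx y hy => ?_⟩
  by_cases hxy : x = y
  · subst hxy; rfl
  obtain ⟨e, he⟩ := e
  obtain rfl : e = s(x, y) := (Sym2.mem_and_mem_iff hxy).1 ⟨hx, hy⟩
  have hadj : G.Adj x y := he
  have hyc : y ∈ (G.connectedComponentMk x).supp :=
    (SimpleGraph.ConnectedComponent.eq.2 hadj.symm.reachable)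
  let c := G.connectedComponentMk x
  have hxc : x ∈ c.supp := rfl
  let e' : (compSubgraph G c).coe.edgeSet :=
    ⟨s(⟨x, hxc⟩, ⟨y, hyc⟩), ⟨hadj, hxc, hyc⟩⟩
  have key := ha c e' ⟨x, hxc⟩ (Sym2.mem_mk_left _ _) ⟨y, hyc⟩ (Sym2.mem_mk_right _ _)
  rw [← hb c x hxc, ← hb c y hyc]
  exact key

lemma components_of_matching {V : Type} (G : SimpleGraph V) (d : (BarySub G)ᵒᵖ ⥤ Type)
    (h : Nonempty (limit d)) {W : Type} {H : SimpleGraph W} (f : H →g G) :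
    Nonempty (limit (restrictBary f d)) :=
  h.map (limit.pre d (mapBary_monotone f).functor.op)

/-- For a forest-shaped structured co-decomposition `d`, `lim d` is empty
iff for some connected component `T` and some vertex `t` of `T` the image of the limit
projection `lim (d|_{∫Tᵒᵖ}) → d(t)` is empty; moreover, for a fixed component, if this image
is empty for one vertex then it is empty for every vertex. -/
theorem stmt_12 {V : Type} [Fintype V] (G : SimpleGraph V) (hG : G.IsAcyclic)
    (d : (BarySub G)ᵒᵖ ⥤ Type) [∀ z, Finite (d.obj z)] :
    (IsEmpty (limit d) ↔
      ∃ (c : G.ConnectedComponent) (t : V) (ht : t ∈ c.supp),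
        imSet (compSubgraph G c).coe (restrictBary (compSubgraph G c).hom d)
          (vtx (compSubgraph G c).coe ⟨t, ht⟩) = ∅) ∧
    (∀ (c : G.ConnectedComponent) (t t' : V) (ht : t ∈ c.supp) (ht' : t' ∈ c.supp),
      imSet (compSubgraph G c).coe (restrictBary (compSubgraph G c).hom d)
          (vtx (compSubgraph G c).coe ⟨t, ht⟩) = ∅ →
      imSet (compSubgraph G c).coe (restrictBary (compSubgraph G c).hom d)
          (vtx (compSubgraph G c).coe ⟨t', ht'⟩) = ∅) := by
  simp only [imSet_eq_empty_iff]
  refine ⟨⟨fun h => ?_, ?_⟩, fun _ _ _ _ _ h => h⟩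
  · by_contra hc
    push Not at hc
    apply not_nonempty_iff.2 h
    rw [nonempty_limit_iff]
    refine matching_of_components G d fun c => ?_
    rw [← nonempty_limit_iff]
    obtain ⟨t, ht⟩ := c.nonempty_supp
    exact hc c t ht
  · rintro ⟨c, t, ht, h⟩
    rw [← not_nonempty_iff] at h ⊢
    exact fun h' => h (components_of_matching G d h' _)
end
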